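/- arXiv:0711.1536 — 2 statements merged into one kernel-verified Lean document; each statement's English description precedes it below -/
import Mathlib

section
/- Let V be a finite-dimensional vector space over 𝔽₂ and let Q, Q' : V → 𝔽₂ be quadratic forms (i.e. Q(a·x) = a²Q(x) and the polar form B(x,y) = Q(x+y) + Q(x) + Q(y) is bilinear). Then Q and Q' are equivalent (there exists a linear automorphism φ of V with Q' = Q ∘ φ) if and only if the bilinear radicals bilrad(V,B) = {x ∈ V | B(x,y) = 0 for all y} and bilrad(V,B') have the same dimension and the sets {x ∈ V | Q(x) = 0} and {x ∈ V | Q'(x) = 0} have the same cardinality. (Browder's classification, Theorem 5.1: a quadratic form over 𝔽₂ is determined up to equivalence by (dim V, dim bilrad, Arf), where the Arf invariant is Browder's democratic invariant recording whether the majority of elements map to 0, to 1, or equally many to each.) -/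
/-!
A zero `e` of `Q` outside the bilinear radical extends to a hyperbolic pair, and the plane it spans
splits off as an orthogonal summand. The remaining summand has the same radical dimension, and its
number of zeros is determined by that of `Q`, so the invariants descend and one inducts on
the dimension. Whether such an `e` exists is itself visible from the invariants: it does if and
only if `Q` has more zeros than its bilinear radical has elements. When none exists, the zeros of
`Q` form a subspace, and over `𝔽₂` a form is determined by its zeros, so a linear isomorphism
matching the two zero subspaces is an isometry.
-/

open Module QuadraticMap

namespace QuadraticFormClassification

section BilinRadical

variable {R M M₁ M₂ N : Type*} [CommRing R] [AddCommGroup M] [Module R M]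
  [AddCommGroup M₁] [Module R M₁] [AddCommGroup M₂] [Module R M₂] [AddCommGroup N] [Module R N]

/-- The bilinear radical of a quadratic map: the radical of its polar form. Mathlib's
`QuadraticMap.radical` is the smaller submodule of those of its elements where `Q` vanishes. -/
abbrev bilinRadical (Q : QuadraticMap R M N) : Submodule R M :=
  LinearMap.ker Q.polarBilin

theorem mem_bilinRadical {Q : QuadraticMap R M N} {x : M} :
    x ∈ bilinRadical Q ↔ ∀ y, polar Q x y = 0 := by
  simp only [LinearMap.mem_ker, LinearMap.ext_iff, polarBilin_apply_apply, LinearMap.zero_apply]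

theorem map_bilinRadical {Q₁ : QuadraticMap R M₁ N} {Q₂ : QuadraticMap R M₂ N}
    (φ : Q₁.IsometryEquiv Q₂) :
    (bilinRadical Q₁).map φ.toLinearEquiv.toLinearMap = bilinRadical Q₂ := by
  have polar_map (x y : M₁) : polar Q₂ (φ x) (φ y) = polar Q₁ x y := by
    simp only [polar, ← map_add, φ.map_app]
  ext x
  obtain ⟨x, rfl⟩ := φ.toLinearEquiv.surjective x
  simp [-LinearMap.mem_ker, mem_bilinRadical, φ.toLinearEquiv.surjective.forall, polar_map]

theorem finrank_bilinRadical_eq_of_equivalent {Q₁ : QuadraticMap R M₁ N}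
    {Q₂ : QuadraticMap R M₂ N} (h : Q₁.Equivalent Q₂) :
    finrank R (bilinRadical Q₁) = finrank R (bilinRadical Q₂) := by
  obtain ⟨φ⟩ := h
  rw [← map_bilinRadical φ, LinearEquiv.finrank_map_eq]

theorem card_zeros_eq_of_equivalent {Q₁ : QuadraticMap R M₁ N} {Q₂ : QuadraticMap R M₂ N}
    (h : Q₁.Equivalent Q₂) : Nat.card {x | Q₁ x = 0} = Nat.card {x | Q₂ x = 0} := by
  obtain ⟨φ⟩ := h
  exact Nat.card_congr (φ.toEquiv.subtypeEquiv fun x ↦ by simp)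

theorem mem_radical_iff_of_zeros_subset_bilinRadical {Q : QuadraticMap R M N}
    (h : ∀ x, Q x = 0 → x ∈ bilinRadical Q) {x : M} : x ∈ Q.radical ↔ Q x = 0 :=
  ⟨fun hx ↦ hx.1, fun hx ↦ ⟨hx, h x hx⟩⟩

end BilinRadical

section HyperbolicPlane

variable (R : Type*) {M : Type*} [CommRing R] [AddCommGroup M] [Module R M]

/-- The hyperbolic plane: the quadratic form `(a, b) ↦ a * b` on `R × R`. -/
def hyperbolicPlane : QuadraticForm R (R × R) :=
  linMulLin (LinearMap.fst R R R) (LinearMap.snd R R R)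

variable {R}

@[simp]
theorem hyperbolicPlane_apply (p : R × R) : hyperbolicPlane R p = p.1 * p.2 := rfl

theorem polar_hyperbolicPlane (p q : R × R) :
    polar (hyperbolicPlane R) p q = p.1 * q.2 + p.2 * q.1 := by
  simp only [polar, hyperbolicPlane_apply, Prod.fst_add, Prod.snd_add]
  ring

theorem bilinRadical_hyperbolicPlane_prod (Q : QuadraticForm R M) :
    bilinRadical ((hyperbolicPlane R).prod Q) =
      (bilinRadical Q).map (LinearMap.inr R (R × R) M) := by
  ext ⟨⟨a, b⟩, x⟩
  simp only [mem_bilinRadical, polar_prod, polar_hyperbolicPlane, Submodule.mem_map]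
  constructor
  · intro h
    have ha : a = 0 := by simpa using h ((0, 1), 0)
    have hb : b = 0 := by simpa using h ((1, 0), 0)
    exact ⟨x, fun y ↦ by simpa using h (0, y), by rw [ha, hb]; rfl⟩
  · rintro ⟨y, hy, hyx⟩
    obtain ⟨⟨rfl, rfl⟩, rfl⟩ : ((0 : R) = a ∧ (0 : R) = b) ∧ y = x := by
      simpa only [LinearMap.inr_apply, Prod.mk.injEq, Prod.zero_eq_mk] using hyx
    intro p
    simp [hy]

theorem finrank_bilinRadical_hyperbolicPlane_prod (Q : QuadraticForm R M) :
    finrank R (bilinRadical ((hyperbolicPlane R).prod Q)) = finrank R (bilinRadical Q) := by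
  rw [bilinRadical_hyperbolicPlane_prod]
  exact (Submodule.equivMapOfInjective _ LinearMap.inr_injective _).finrank_eq.symm

end HyperbolicPlane

section HyperbolicPair

variable {R M : Type*} [CommRing R] [AddCommGroup M] [Module R M] {Q : QuadraticForm R M} {e f : M}

/-- A hyperbolic pair of a quadratic form: two zeros of `Q` whose polar pairing is `1`. -/
structure IsHyperbolicPair (Q : QuadraticForm R M) (e f : M) : Prop where
  map_left : Q e = 0
  map_right : Q f = 0
  polar_eq_one : polar Q e f = 1

/-- The submodule of vectors orthogonal to both `e` and `f` for the polar form of `Q`. -/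
def pairComplement (Q : QuadraticForm R M) (e f : M) : Submodule R M :=
  LinearMap.ker (Q.polarBilin e) ⊓ LinearMap.ker (Q.polarBilin f)

theorem mem_pairComplement {x : M} :
    x ∈ pairComplement Q e f ↔ polar Q e x = 0 ∧ polar Q f x = 0 := by
  simp [pairComplement]

theorem isHyperbolicPair_sub_smul (he : Q e = 0) (hef : polar Q e f = 1) :
    IsHyperbolicPair Q e (f - Q f • e) where
  map_left := he
  map_right := by
    rw [sub_eq_add_neg, QuadraticMap.map_add Q, ← neg_smul]
    simp [QuadraticMap.map_smul, he, polar_comm Q f e, hef]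
  polar_eq_one := by simp [polar_sub_right, polar_self, he, hef]

namespace IsHyperbolicPair

theorem polar_left_smul_add_smul_add (h : IsHyperbolicPair Q e f) (a b : R)
    (w : pairComplement Q e f) :
    polar Q e (a • e + b • f + w) = b := by
  simp [polar_add_right, polar_self, h.map_left, h.polar_eq_one, (mem_pairComplement.1 w.2).1]

theorem polar_right_smul_add_smul_add (h : IsHyperbolicPair Q e f) (a b : R)
    (w : pairComplement Q e f) :
    polar Q f (a • e + b • f + w) = a := by
  simp [polar_add_right, polar_self, h.map_right, polar_comm Q f e, h.polar_eq_one,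
    (mem_pairComplement.1 w.2).2]

theorem sub_smul_add_smul_mem_pairComplement (h : IsHyperbolicPair Q e f) (x : M) :
    x - (polar Q f x • e + polar Q e x • f) ∈ pairComplement Q e f := by
  simp [mem_pairComplement, polar_sub_right, polar_add_right, polar_self, h.map_left,
    h.map_right, polar_comm Q f e, h.polar_eq_one]

theorem map_smul_add_smul_add (h : IsHyperbolicPair Q e f) (a b : R)
    (w : pairComplement Q e f) :
    Q (a • e + b • f + w) = a * b + Q w := by
  obtain ⟨hew, hfw⟩ := mem_pairComplement.1 w.2
  simp [QuadraticMap.map_add, QuadraticMap.map_smul, polar_add_left, h.map_left, h.map_right,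
    h.polar_eq_one, hew, hfw, mul_comm]

theorem equivalent_hyperbolicPlane_prod (h : IsHyperbolicPair Q e f) :
    Q.Equivalent ((hyperbolicPlane R).prod (Q.restrict (pairComplement Q e f))) := by
  let ψ : ((R × R) × pairComplement Q e f) →ₗ[R] M :=
    ((LinearMap.toSpanSingleton R M e).coprod (LinearMap.toSpanSingleton R M f)).coprod
      (pairComplement Q e f).subtype
  have ψ_apply (a b : R) (w : pairComplement Q e f) : ψ ((a, b), w) = a • e + b • f + w := rfl
  have ψ_injective : Function.Injective ψ := by
    rw [injective_iff_map_eq_zero]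
    rintro ⟨⟨a, b⟩, w⟩ hzero
    rw [ψ_apply] at hzero
    have ha : a = 0 := by rw [← h.polar_right_smul_add_smul_add a b w, hzero, polar_zero_right]
    have hb : b = 0 := by rw [← h.polar_left_smul_add_smul_add a b w, hzero, polar_zero_right]
    simpa [ha, hb] using hzero
  have ψ_surjective : Function.Surjective ψ := fun x ↦
    ⟨((polar Q f x, polar Q e x), ⟨_, h.sub_smul_add_smul_mem_pairComplement x⟩), by
      rw [ψ_apply, add_sub_cancel]⟩
  exact .symm ⟨LinearEquiv.ofBijective ψ ⟨ψ_injective, ψ_surjective⟩,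
    fun ⟨⟨a, b⟩, w⟩ ↦ h.map_smul_add_smul_add a b w⟩

end IsHyperbolicPair

end HyperbolicPair

section Field

variable {K V V' : Type*} [Field K] [AddCommGroup V] [Module K V] [AddCommGroup V'] [Module K V']

theorem exists_equivalent_hyperbolicPlane_prod {Q : QuadraticForm K V} {x : V} (hx : Q x = 0)
    (hxrad : x ∉ bilinRadical Q) :
    ∃ W : Submodule K V, Q.Equivalent ((hyperbolicPlane K).prod (Q.restrict W)) := by
  obtain ⟨y, hy⟩ : ∃ y, polar Q x y ≠ 0 := by
    simpa only [mem_bilinRadical, not_forall] using hxrad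
  have hxy : polar Q x ((polar Q x y)⁻¹ • y) = 1 := by simp [polar_smul_right, hy]
  exact ⟨_, (isHyperbolicPair_sub_smul hx hxy).equivalent_hyperbolicPlane_prod⟩

theorem finrank_eq_add_two_of_equivalent_hyperbolicPlane_prod [FiniteDimensional K V']
    {Q : QuadraticForm K V} {q : QuadraticForm K V'}
    (h : Q.Equivalent ((hyperbolicPlane K).prod q)) :
    finrank K V = finrank K V' + 2 := by
  obtain ⟨φ⟩ := h
  rw [φ.toLinearEquiv.finrank_eq, finrank_prod, finrank_prod, finrank_self, add_comm]

theorem natCard_eq_of_finrank_eq [FiniteDimensional K V] [FiniteDimensional K V']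
    (h : finrank K V = finrank K V') : Nat.card V = Nat.card V' :=
  Nat.card_congr (LinearEquiv.ofFinrankEq V V' h).toEquiv

theorem exists_linearEquiv_map_eq [FiniteDimensional K V] [FiniteDimensional K V']
    {S : Submodule K V} {S' : Submodule K V'} (hV : finrank K V = finrank K V')
    (hS : finrank K S = finrank K S') : ∃ φ : V ≃ₗ[K] V', S.map φ.toLinearMap = S' := by
  let ψ : V ≃ₗ[K] V' := .ofFinrankEq V V' hV
  let θ : S.map ψ.toLinearMap ≃ₗ[K] S' := .ofFinrankEq _ _ (by rw [ψ.finrank_map_eq, hS])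
  obtain ⟨g, hg⟩ := Submodule.exists_linearEquiv_restrict_eq θ
  refine ⟨ψ ≪≫ₗ g, Submodule.eq_of_le_of_finrank_eq ?_ (by rw [LinearEquiv.finrank_map_eq, hS])⟩
  rintro _ ⟨x, hx, rfl⟩
  have hgx := hg ⟨ψ x, Submodule.mem_map_of_mem hx⟩
  exact hgx ▸ (θ _).2

end Field

section FiniteField

variable {K V V' : Type*} [Field K] [Finite K] [AddCommGroup V] [Module K V]
  [AddCommGroup V'] [Module K V']

theorem card_zeros_hyperbolicPlane_prod [Finite V] (Q : QuadraticForm K V) :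
    Nat.card {p | (hyperbolicPlane K).prod Q p = 0} =
      Nat.card Kˣ * Nat.card V + Nat.card K * Nat.card {x | Q x = 0} := by
  -- A zero `((a, b), x)` is determined by `(a, x)` when `a ≠ 0`, and by `(b, x)` when `a = 0`.
  let g : Kˣ × V ⊕ K × {x | Q x = 0} → {p | (hyperbolicPlane K).prod Q p = 0} := Sum.elim
    (fun p ↦ ⟨((p.1, -(p.1⁻¹ * Q p.2)), p.2), by simp⟩)
    (fun p ↦ ⟨((0, p.1), p.2), by simp [show Q p.2 = 0 from p.2.2]⟩)
  have g_injective : Function.Injective g := by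
    rintro (⟨u, x⟩ | ⟨b, x⟩) (⟨u', x'⟩ | ⟨b', x'⟩) h <;>
      simp_all [g, Subtype.ext_iff, Units.ext_iff, eq_comm (a := (0 : K))]
  have g_surjective : Function.Surjective g := by
    rintro ⟨⟨⟨a, b⟩, x⟩, hzero⟩
    replace hzero : a * b + Q x = 0 := hzero
    obtain rfl | ha := eq_or_ne a 0
    · exact ⟨.inr (b, ⟨x, by simpa using hzero⟩), rfl⟩
    · refine ⟨.inl (Units.mk0 a ha, x), ?_⟩
      simp [g, eq_neg_of_add_eq_zero_right hzero, ha]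
  rw [← Nat.card_eq_of_bijective g ⟨g_injective, g_surjective⟩, Nat.card_sum, Nat.card_prod,
    Nat.card_prod]

theorem card_zeros_eq_of_card_zeros_hyperbolicPlane_prod_eq [FiniteDimensional K V]
    [FiniteDimensional K V'] {Q : QuadraticForm K V} {Q' : QuadraticForm K V'}
    (hdim : finrank K V = finrank K V')
    (h : Nat.card {p | (hyperbolicPlane K).prod Q p = 0} =
      Nat.card {p | (hyperbolicPlane K).prod Q' p = 0}) :
    Nat.card {x | Q x = 0} = Nat.card {x | Q' x = 0} := by
  have : Finite V := Module.finite_of_finite K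
  have : Finite V' := Module.finite_of_finite K
  rw [card_zeros_hyperbolicPlane_prod, card_zeros_hyperbolicPlane_prod,
    natCard_eq_of_finrank_eq hdim] at h
  exact Nat.eq_of_mul_eq_mul_left Nat.card_pos (Nat.add_left_cancel h)

theorem exists_zero_notMem_bilinRadical_iff [FiniteDimensional K V] {Q : QuadraticForm K V} :
    (∃ x, Q x = 0 ∧ x ∉ bilinRadical Q) ↔
      Nat.card (bilinRadical Q) < Nat.card {x | Q x = 0} := by
  have : Finite V := Module.finite_of_finite K
  constructor
  · rintro ⟨x, hx, hxrad⟩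
    obtain ⟨W, hQ⟩ := exists_equivalent_hyperbolicPlane_prod hx hxrad
    have : Nonempty {w | Q.restrict W w = 0} := ⟨0, QuadraticMap.map_zero _⟩
    calc Nat.card (bilinRadical Q)
      _ = Nat.card (bilinRadical (Q.restrict W)) := by
        refine natCard_eq_of_finrank_eq (K := K) ?_
        rw [finrank_bilinRadical_eq_of_equivalent hQ, finrank_bilinRadical_hyperbolicPlane_prod]
      _ ≤ Nat.card W := Finite.card_subtype_le _
      _ ≤ Nat.card Kˣ * Nat.card W := Nat.le_mul_of_pos_left _ Nat.card_pos
      _ < Nat.card Kˣ * Nat.card W + Nat.card K * Nat.card {w | Q.restrict W w = 0} :=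
        Nat.lt_add_of_pos_right (Nat.mul_pos Nat.card_pos Nat.card_pos)
      _ = Nat.card {x | Q x = 0} := by
        rw [card_zeros_eq_of_equivalent hQ, card_zeros_hyperbolicPlane_prod]
  · contrapose!
    exact fun h ↦ Nat.card_mono (Set.toFinite (bilinRadical Q : Set V)) h

end FiniteField

section ZModTwo

variable {V V' : Type*} [AddCommGroup V] [Module (ZMod 2) V] [FiniteDimensional (ZMod 2) V]
  [AddCommGroup V'] [Module (ZMod 2) V'] [FiniteDimensional (ZMod 2) V']

theorem equivalent_of_zeros_subset_bilinRadical {Q : QuadraticForm (ZMod 2) V}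
    {Q' : QuadraticForm (ZMod 2) V'} (hQ : ∀ x, Q x = 0 → x ∈ bilinRadical Q)
    (hQ' : ∀ x, Q' x = 0 → x ∈ bilinRadical Q')
    (hdim : finrank (ZMod 2) V = finrank (ZMod 2) V')
    (hzeros : Nat.card {x | Q x = 0} = Nat.card {x | Q' x = 0}) : Q.Equivalent Q' := by
  have mem_radical {x : V} := mem_radical_iff_of_zeros_subset_bilinRadical hQ (x := x)
  have mem_radical' {x : V'} := mem_radical_iff_of_zeros_subset_bilinRadical hQ' (x := x)
  have hcard : Nat.card Q.radical = Nat.card Q'.radical := by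
    simp only [← mem_radical, ← mem_radical'] at hzeros
    exact hzeros
  have hrad : finrank (ZMod 2) Q.radical = finrank (ZMod 2) Q'.radical := by
    rw [natCard_eq_pow_finrank (K := ZMod 2),
      natCard_eq_pow_finrank (K := ZMod 2) (V := Q'.radical), Nat.card_zmod] at hcard
    exact Nat.pow_right_injective le_rfl hcard
  obtain ⟨φ, hφ⟩ := exists_linearEquiv_map_eq hdim hrad
  have hzero_iff (x : V) : Q' (φ x) = 0 ↔ Q x = 0 := by
    rw [← mem_radical, ← mem_radical', ← hφ]
    simp
  have eq_of_zero_iff {a b : ZMod 2} : (a = 0 ↔ b = 0) → a = b := by revert a b; decide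
  exact ⟨φ, fun x ↦ eq_of_zero_iff (hzero_iff x)⟩

theorem equivalent_of_finrank_bilinRadical_eq_of_card_zeros_eq {Q : QuadraticForm (ZMod 2) V}
    {Q' : QuadraticForm (ZMod 2) V'} (hdim : finrank (ZMod 2) V = finrank (ZMod 2) V')
    (hrad : finrank (ZMod 2) (bilinRadical Q) = finrank (ZMod 2) (bilinRadical Q'))
    (hzeros : Nat.card {x | Q x = 0} = Nat.card {x | Q' x = 0}) : Q.Equivalent Q' := by
  induction hn : finrank (ZMod 2) V using Nat.strong_induction_on generalizing V V' with
  | _ n ih =>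
  have hiso : (∃ x, Q x = 0 ∧ x ∉ bilinRadical Q) ↔ ∃ x, Q' x = 0 ∧ x ∉ bilinRadical Q' := by
    rw [exists_zero_notMem_bilinRadical_iff, exists_zero_notMem_bilinRadical_iff, hzeros,
      natCard_eq_of_finrank_eq hrad]
  by_cases h : ∃ x, Q x = 0 ∧ x ∉ bilinRadical Q
  · obtain ⟨x, hx, hxrad⟩ := h
    obtain ⟨x', hx', hxrad'⟩ := hiso.1 ⟨x, hx, hxrad⟩
    obtain ⟨W, hQ⟩ := exists_equivalent_hyperbolicPlane_prod hx hxrad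
    obtain ⟨W', hQ'⟩ := exists_equivalent_hyperbolicPlane_prod hx' hxrad'
    have hdimQ := finrank_eq_add_two_of_equivalent_hyperbolicPlane_prod hQ
    have hdimQ' := finrank_eq_add_two_of_equivalent_hyperbolicPlane_prod hQ'
    have hdimW : finrank (ZMod 2) W = finrank (ZMod 2) W' := by lia
    rw [finrank_bilinRadical_eq_of_equivalent hQ, finrank_bilinRadical_hyperbolicPlane_prod,
      finrank_bilinRadical_eq_of_equivalent hQ', finrank_bilinRadical_hyperbolicPlane_prod] at hrad
    rw [card_zeros_eq_of_equivalent hQ, card_zeros_eq_of_equivalent hQ'] at hzeros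
    have hzerosW := card_zeros_eq_of_card_zeros_hyperbolicPlane_prod_eq hdimW hzeros
    have hW : (Q.restrict W).Equivalent (Q'.restrict W') :=
      ih (finrank (ZMod 2) W) (by lia) hdimW hrad hzerosW rfl
    exact hQ.trans (((Equivalent.refl _).prod hW).trans hQ'.symm)
  · exact equivalent_of_zeros_subset_bilinRadical (by simpa using h) (by simpa using mt hiso.2 h)
      hdim hzeros

end ZModTwo

end QuadraticFormClassification

open QuadraticFormClassification in
/-- **Browder's classification theorem (Theorem 5.1).** Let `V` be a finite-dimensional
vector space over `𝔽₂` and `Q`, `Q'` quadratic forms on `V`.  Then `Q` and `Q'` are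
equivalent (i.e. `Q' = Q ∘ φ` for some linear automorphism `φ` of `V`) if and only if
their bilinear radicals (the kernels of the associated polar bilinear forms
`B(x,y) = Q(x+y) - Q(x) - Q(y)`) have the same dimension and the zero sets
`{x | Q x = 0}` and `{x | Q' x = 0}` have the same cardinality (the latter records the
"democratic" Arf invariant). -/
theorem quadratic_form_classification_F2 (V : Type*) [AddCommGroup V]
    [Module (ZMod 2) V] [FiniteDimensional (ZMod 2) V]
    (Q Q' : QuadraticForm (ZMod 2) V) :
    (∃ φ : V ≃ₗ[ZMod 2] V, ∀ x : V, Q' x = Q (φ x)) ↔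
      (Module.finrank (ZMod 2) ↥(LinearMap.ker Q.polarBilin) =
        Module.finrank (ZMod 2) ↥(LinearMap.ker Q'.polarBilin) ∧
       Nat.card {x : V | Q x = 0} = Nat.card {x : V | Q' x = 0}) := by
  constructor
  · rintro ⟨φ, hφ⟩
    have h : Q'.Equivalent Q := ⟨φ, fun x ↦ (hφ x).symm⟩
    exact ⟨(finrank_bilinRadical_eq_of_equivalent h).symm, (card_zeros_eq_of_equivalent h).symm⟩
  · rintro ⟨hrad, hzeros⟩
    obtain ⟨φ⟩ :=
      equivalent_of_finrank_bilinRadical_eq_of_card_zeros_eq rfl hrad.symm hzeros.symm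
    exact ⟨φ.toLinearEquiv, fun x ↦ (φ.map_app x).symm⟩
end

section
/- Let p be an odd prime, n ≥ 1, and let P be the extraspecial group of order p^{2n+1} and exponent p; concretely, P is generated by elements x₁, …, x_{2n}, ζ of order p with ζ central, [x_{2i−1}, x_{2i}] = ζ for 1 ≤ i ≤ n, and all other commutators among the generators trivial, so that Z(P) = [P,P] = Φ(P) = ⟨ζ⟩ ≅ ℤ/p and V = P/Z(P) ≅ (ℤ/p)^{2n}. Then the image of the natural homomorphism ρ : Aut(P) → Aut(V) × Aut(Z(P)) is isomorphic to the general symplectic group GSp(2n, 𝔽_p) = {M ∈ GL_{2n}(𝔽_p) | Mᵀ J M = cJ for some c ∈ 𝔽_p^×}, where J is the standard symplectic (block-diagonal skew-symmetric) matrix. (Application 1.) -/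
open Matrix

/-!
Commutators define an alternating pairing `V × V → Z(P)`, nondegenerate because its radical is the
image of the centre; every automorphism of `P` multiplies it by the unit through which it acts on
`Z(P) ≅ 𝔽_p`. Conversely, by Baer's trick, for odd `p` the operation `x + y = x y [x, y]^(-1/2)`
makes `P` an `𝔽_p`-vector space surjecting linearly onto `V`. A linear section gives coordinates
`V × Z(P)` in which the product is `(v, a) (w, b) = (v + w, a + b + [v, w] / 2)`, so every
similitude of the pairing lifts to an automorphism. Since `Z(P)` is generated by commutators, the
action on `Z(P)` is determined by the action on `V`. Hence the image of `Aut(P)` is the similitude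
group of the pairing, which a symplectic basis identifies with `GSp(2n, 𝔽_p)`.
-/

section SymplecticBasis

variable {K V : Type*} [Field K] [AddCommGroup V] [Module K V] {B : LinearMap.BilinForm K V}

lemma linearIndependent_finCons_of_apply_ne_zero {n : ℕ} {b : Fin n → V}
    (hb : LinearIndependent K b) {x y : V} (hx : ∀ i, B x (b i) = 0) (hxy : B x y ≠ 0) :
    LinearIndependent K (Fin.cons y b : Fin (n + 1) → V) := by
  refine linearIndependent_finCons.2 ⟨hb, fun hy => hxy ?_⟩
  have hspan : Submodule.span K (Set.range b) ≤ LinearMap.ker (B x) :=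
    Submodule.span_le.2 (Set.range_subset_iff.2 hx)
  exact hspan hy

lemma linearIndependent_finCons_finCons_of_isAlt (hB : B.IsAlt) {n : ℕ} {b : Fin n → V}
    (hb : LinearIndependent K b) {v w : V} (hv : ∀ i, B v (b i) = 0) (hw : ∀ i, B w (b i) = 0)
    (hvw : B v w ≠ 0) :
    LinearIndependent K (Fin.cons v (Fin.cons w b : Fin (n + 1) → V) : Fin (n + 2) → V) := by
  refine linearIndependent_finCons_of_apply_ne_zero (B := B) (x := w)
    (linearIndependent_finCons_of_apply_ne_zero hb hv hvw) ?_ (mt hB.eq_iff.1 hvw)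
  exact Fin.cases (hB.self_eq_zero w) hw

lemma mem_orthogonal_span_pair_iff {v w x : V} :
    x ∈ B.orthogonal (Submodule.span K {v, w}) ↔ B v x = 0 ∧ B w x = 0 := by
  refine ⟨fun hx => ?_, fun ⟨hv, hw⟩ u hu => ?_⟩
  · exact ⟨hx v (Submodule.mem_span_of_mem (by simp)), hx w (Submodule.mem_span_of_mem (by simp))⟩
  · obtain ⟨a, c, rfl⟩ := Submodule.mem_span_pair.1 hu
    simp [hv, hw]

lemma disjoint_span_pair_orthogonal (hB : B.IsAlt) {v w : V} (hvw : B v w ≠ 0) :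
    Disjoint (Submodule.span K {v, w}) (B.orthogonal (Submodule.span K {v, w})) := by
  refine Submodule.disjoint_def.2 fun x hx hx' => ?_
  obtain ⟨a, c, rfl⟩ := Submodule.mem_span_pair.1 hx
  have hwv : B w v ≠ 0 := mt hB.eq_iff.1 hvw
  rw [mem_orthogonal_span_pair_iff] at hx'
  obtain ⟨rfl, rfl⟩ : c = 0 ∧ a = 0 := by simpa [hB.self_eq_zero, hvw, hwv] using hx'
  simp

lemma finrank_span_pair_of_isAlt (hB : B.IsAlt) {v w : V} (hvw : B v w ≠ 0) :
    Module.finrank K (Submodule.span K {v, w}) = 2 := by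
  have hli : LinearIndependent K ![v, w] :=
    linearIndependent_finCons_finCons_of_isAlt hB linearIndependent_empty_type nofun nofun hvw
  rw [← Matrix.range_cons_cons_empty v w ![], finrank_span_eq_card hli, Fintype.card_fin]

lemma restrict_orthogonal_span_pair_nondegenerate [FiniteDimensional K V] (hB : B.IsAlt)
    (hnd : B.Nondegenerate) {v w : V} (hvw : B v w ≠ 0) :
    (B.restrict (B.orthogonal (Submodule.span K {v, w}))).Nondegenerate := by
  refine B.nondegenerate_restrict_of_disjoint_orthogonal hB.isRefl ?_
  rw [LinearMap.BilinForm.orthogonal_orthogonal hnd hB.isRefl]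
  exact (disjoint_span_pair_orthogonal hB hvw).symm

/-- The standard symplectic matrix of size `2 * n`, block diagonal with `n` blocks
`!![0, 1; -1, 0]`. It is given by entries, indexed from `0`, so that blocks start at even
indices. -/
def stdSymplecticMatrix (R : Type*) [Zero R] [One R] [Neg R] (n : ℕ) :
    Matrix (Fin (2 * n)) (Fin (2 * n)) R :=
  .of fun i j =>
    if (j : ℕ) = (i : ℕ) + 1 ∧ (i : ℕ) % 2 = 0 then 1
    else if (i : ℕ) = (j : ℕ) + 1 ∧ (j : ℕ) % 2 = 0 then -1 else 0

lemma apply_finCons_finCons_eq_stdSymplecticMatrix (hB : B.IsAlt) {n : ℕ} {b : Fin (2 * n) → V}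
    (hb : ∀ i j, B (b i) (b j) = stdSymplecticMatrix K n i j) {v w : V}
    (hv : ∀ i, B v (b i) = 0) (hw : ∀ i, B w (b i) = 0) (hvw : B v w = 1)
    (i j : Fin (2 * (n + 1))) :
    B ((Fin.cons v (Fin.cons w b : Fin (2 * n + 1) → V) : Fin (2 * n + 2) → V) i)
      ((Fin.cons v (Fin.cons w b : Fin (2 * n + 1) → V) : Fin (2 * n + 2) → V) j) =
        stdSymplecticMatrix K (n + 1) i j := by
  have hv' (i) : B (b i) v = 0 := hB.eq_iff.1 (hv i)
  have hw' (i) : B (b i) w = 0 := hB.eq_iff.1 (hw i)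
  have hwv : B w v = -1 := by rw [← LinearMap.IsAlt.neg hB v w, hvw]
  have one_mod : 1 % (2 * (n + 1)) = 1 := Nat.mod_eq_of_lt (by omega)
  have add_two_mod (k : ℕ) : (k + 1 + 1) % 2 = k % 2 := Nat.add_mod_right k 2
  cases i using Fin.cases with
  | zero =>
    cases j using Fin.cases with
    | zero => simp [stdSymplecticMatrix, hB.self_eq_zero]
    | succ j => cases j using Fin.cases <;> simp [stdSymplecticMatrix, hvw, hv, one_mod]
  | succ i =>
    cases i using Fin.cases with
    | zero =>
      cases j using Fin.cases with
      | zero => simp [stdSymplecticMatrix, hwv, one_mod]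
      | succ j =>
        cases j using Fin.cases <;> simp [stdSymplecticMatrix, hB.self_eq_zero, hw, one_mod]
    | succ i =>
      cases j using Fin.cases with
      | zero => simp [stdSymplecticMatrix, hv']
      | succ j =>
        cases j using Fin.cases with
        | zero => simp [stdSymplecticMatrix, hw', one_mod]
        | succ j => simp [stdSymplecticMatrix, hb, add_two_mod]

theorem exists_linearIndependent_apply_eq_stdSymplecticMatrix [FiniteDimensional K V]
    (hB : B.IsAlt) (hnd : B.Nondegenerate) {n : ℕ} (hV : Module.finrank K V = 2 * n) :
    ∃ b : Fin (2 * n) → V, LinearIndependent K b ∧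
      ∀ i j, B (b i) (b j) = stdSymplecticMatrix K n i j := by
  induction n generalizing V with
  | zero =>
    have : IsEmpty (Fin (2 * 0)) := Fin.isEmpty
    exact ⟨nofun, linearIndependent_empty_type, nofun⟩
  | succ n ih =>
    have : Nontrivial V := Module.nontrivial_of_finrank_pos (R := K) (by omega)
    obtain ⟨v, hv⟩ := exists_ne (0 : V)
    obtain ⟨w, hvw⟩ : ∃ w, B v w = 1 := by
      obtain ⟨u, hu⟩ := not_forall.1 (mt (hnd.1 v) hv)
      exact ⟨(B v u)⁻¹ • u, by simp [hu]⟩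
    have hvw0 : B v w ≠ 0 := hvw ▸ one_ne_zero
    set W := B.orthogonal (Submodule.span K {v, w})
    have hW : Module.finrank K W = 2 * n := by
      rw [LinearMap.BilinForm.finrank_orthogonal hnd, hV, finrank_span_pair_of_isAlt hB hvw0]
      omega
    obtain ⟨b, hb, hbB⟩ := ih (V := W) (B := B.restrict W) (fun x => hB x)
      (restrict_orthogonal_span_pair_nondegenerate hB hnd hvw0) hW
    have hvb (i) : B v (b i) = 0 := (mem_orthogonal_span_pair_iff.1 (b i).2).1
    have hwb (i) : B w (b i) = 0 := (mem_orthogonal_span_pair_iff.1 (b i).2).2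
    have hb' : LinearIndependent K fun i => (b i : V) := hb.map' W.subtype W.ker_subtype
    exact ⟨_, linearIndependent_finCons_finCons_of_isAlt hB hb' hvb hwb hvw0,
      apply_finCons_finCons_eq_stdSymplecticMatrix hB hbB hvb hwb hvw⟩

theorem exists_symplecticBasis [FiniteDimensional K V] (hB : B.IsAlt) (hnd : B.Nondegenerate)
    {n : ℕ} (hV : Module.finrank K V = 2 * n) :
    ∃ b : Module.Basis (Fin (2 * n)) K V, B.toMatrix b = stdSymplecticMatrix K n := by
  obtain ⟨b, hb, hbB⟩ := exists_linearIndependent_apply_eq_stdSymplecticMatrix hB hnd hV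
  refine ⟨basisOfLinearIndependentOfCardEqFinrank' b hb (by simp [hV]), ?_⟩
  ext i j
  simp [LinearMap.BilinForm.toMatrix_apply, hbB]

end SymplecticBasis

section Similitude

variable {R M ι : Type*} [CommRing R] [AddCommGroup M] [Module R M]

/-- The similitude group of a bilinear form: the linear automorphisms that multiply the form by a
unit. -/
def similitudeGroup (B : LinearMap.BilinForm R M) :
    Subgroup (LinearMap.GeneralLinearGroup R M) where
  carrier := {f | ∃ c : Rˣ, ∀ v w, B (f.1 v) (f.1 w) = c * B v w}
  one_mem' := ⟨1, by simp⟩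
  mul_mem' := by
    rintro f g ⟨c, hf⟩ ⟨d, hg⟩
    exact ⟨c * d, fun v w => by simp [hf, hg, mul_assoc]⟩
  inv_mem' := by
    rintro f ⟨c, hf⟩
    have hff (v : M) : f.1 (f⁻¹.1 v) = v := LinearMap.congr_fun f.mul_inv v
    exact ⟨c⁻¹, fun v w => by rw [Units.eq_inv_mul_iff_mul_eq, ← hf, hff, hff]⟩

lemma mem_similitudeGroup_iff {B : LinearMap.BilinForm R M}
    {f : LinearMap.GeneralLinearGroup R M} :
    f ∈ similitudeGroup B ↔ ∃ c : Rˣ, ∀ v w, B (f.1 v) (f.1 w) = c * B v w :=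
  Iff.rfl

lemma toLin'_mem_similitudeGroup_iff [Fintype ι] [DecidableEq ι] {B : LinearMap.BilinForm R M}
    (b : Module.Basis ι R M) {g : GL ι R} :
    Matrix.GeneralLinearGroup.toLin' b g ∈ similitudeGroup B ↔
      ∃ c : Rˣ, (g : Matrix ι ι R)ᵀ * B.toMatrix b * g = (c : R) • B.toMatrix b := by
  refine mem_similitudeGroup_iff.trans (exists_congr fun c => ?_)
  have hg : LinearMap.toMatrix b b (Matrix.GeneralLinearGroup.toLin' b g).1 = g.1 :=
    LinearMap.toMatrix_toLin b b g.1
  rw [← hg, ← LinearMap.BilinForm.toMatrix_comp, ← map_smul,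
    (LinearMap.BilinForm.toMatrix b).injective.eq_iff, LinearMap.ext_iff₂]
  rfl

/-- The matrices, in a basis `b`, of the elements of a similitude group form a group isomorphic to
it. -/
noncomputable def similitudeGroupMulEquivMatrix [Fintype ι] [DecidableEq ι]
    {B : LinearMap.BilinForm R M} (b : Module.Basis ι R M) {G : Subgroup (GL ι R)}
    (hG : ∀ g : GL ι R, g ∈ G ↔
      ∃ c : Rˣ, (g : Matrix ι ι R)ᵀ * B.toMatrix b * g = (c : R) • B.toMatrix b) :
    similitudeGroup B ≃* G :=
  have hmap : G.map (Matrix.GeneralLinearGroup.toLin' b : GL ι R →* _) = similitudeGroup B := by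
    have hcomap :
        G = (similitudeGroup B).comap (Matrix.GeneralLinearGroup.toLin' b : GL ι R →* _) :=
      Subgroup.ext fun g => (hG g).trans (toLin'_mem_similitudeGroup_iff b).symm
    rw [hcomap, Subgroup.map_comap_eq_self_of_surjective (MulEquiv.surjective _)]
  (MulEquiv.subgroupCongr hmap.symm).trans
    ((Matrix.GeneralLinearGroup.toLin' b).subgroupMap G).symm

end Similitude

section RangeEquiv

variable {G H K : Type*} [Group G] [Group H] [Group K]

/-- Two homomorphisms with the same kernel have isomorphic images: `f x` corresponds to `g x`. -/
noncomputable def rangeMulEquivOfKerEq (f : G →* H) (g : G →* K) (h : f.ker = g.ker) :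
    f.range ≃* g.range :=
  (QuotientGroup.quotientKerEquivRange f).symm.trans
    ((QuotientGroup.quotientMulEquivOfEq h).trans (QuotientGroup.quotientKerEquivRange g))

end RangeEquiv

lemma exists_addMonoidHom_rightInverse (p : ℕ) [Fact p.Prime] {M N : Type*} [AddCommGroup M]
    [AddCommGroup N] [Module (ZMod p) M] [Module (ZMod p) N] (f : M →+ N)
    (hf : Function.Surjective f) : ∃ g : N →+ M, Function.RightInverse g f := by
  obtain ⟨g, hg⟩ := (f.toZModLinearMap p).exists_rightInverse_of_surjective
    (LinearMap.range_eq_top.2 hf)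
  exact ⟨g.toAddMonoidHom, LinearMap.congr_fun hg⟩

/-- A central extension `A → P → V` of abelian groups. The outer terms are written additively,
since they will be vector spaces. -/
structure CentralExtension (A P V : Type*) [AddCommGroup A] [Group P] [AddCommGroup V] extends
    GroupExtension (Multiplicative A) P (Multiplicative V) where
  inl_mem_center (a : Multiplicative A) : inl a ∈ Subgroup.center P

namespace CentralExtension

variable {A P V : Type*} [AddCommGroup A] [Group P] [AddCommGroup V]

/-- A group whose centre is its commutator subgroup, as a central extension of its
abelianization by its centre. -/
def ofCenterEqCommutator (e : Multiplicative A ≃* Subgroup.center P)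
    (h : Subgroup.center P = commutator P) :
    CentralExtension A P (Additive (Abelianization P)) where
  inl := (Subgroup.center P).subtype.comp e.toMonoidHom
  rightHom := Abelianization.of
  inl_injective := Subtype.val_injective.comp e.injective
  range_inl_eq_ker_rightHom := by
    rw [MonoidHom.range_comp, MonoidHom.range_eq_top.2 e.surjective, ← MonoidHom.range_eq_map,
      Subgroup.range_subtype, h]
    exact (Abelianization.ker_of P).symm
  rightHom_surjective := QuotientGroup.mk_surjective
  inl_mem_center a := (e a).2

variable (S : CentralExtension A P V)

/-- The inclusion of the kernel of a central extension, in additive notation. -/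
def incl (a : A) : P := S.inl (.ofAdd a)

/-- The projection onto the quotient of a central extension, in additive notation. -/
def proj (x : P) : V := (S.rightHom x).toAdd

@[simp] lemma incl_zero : S.incl 0 = 1 := map_one S.inl

@[simp] lemma incl_add (a b : A) : S.incl (a + b) = S.incl a * S.incl b := map_mul S.inl _ _

@[simp] lemma incl_neg (a : A) : S.incl (-a) = (S.incl a)⁻¹ := map_inv S.inl _

lemma incl_injective : Function.Injective S.incl :=
  S.inl_injective.comp Multiplicative.ofAdd.injective

lemma commute_incl (a : A) (x : P) : Commute (S.incl a) x :=
  (Subgroup.mem_center_iff.1 (S.inl_mem_center _) x).symm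

@[simp] lemma proj_one : S.proj 1 = 0 := map_one S.rightHom

@[simp] lemma proj_mul (x y : P) : S.proj (x * y) = S.proj x + S.proj y := map_mul S.rightHom x y

@[simp] lemma proj_inv (x : P) : S.proj x⁻¹ = -S.proj x := map_inv S.rightHom x

@[simp] lemma proj_pow (x : P) (n : ℕ) : S.proj (x ^ n) = n • S.proj x := map_pow S.rightHom x n

lemma proj_surjective : Function.Surjective S.proj :=
  Multiplicative.toAdd.surjective.comp S.rightHom_surjective

lemma nsmul_eq_zero_of_pow_eq_one (S : CentralExtension A P V) {n : ℕ} (hP : ∀ x : P, x ^ n = 1)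
    (v : V) : n • v = 0 := by
  obtain ⟨x, rfl⟩ := S.proj_surjective v
  rw [← proj_pow, hP, proj_one]

lemma proj_eq_zero_iff {x : P} : S.proj x = 0 ↔ ∃ a, S.incl a = x := by
  rw [proj, toAdd_eq_zero, ← MonoidHom.mem_ker, ← S.range_inl_eq_ker_rightHom]
  exact Multiplicative.ofAdd.surjective.exists

@[simp] lemma proj_incl (a : A) : S.proj (S.incl a) = 0 := S.proj_eq_zero_iff.2 ⟨a, rfl⟩

lemma exists_eq_mul_incl {x y : P} (h : S.proj x = S.proj y) : ∃ a, x = y * S.incl a := by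
  obtain ⟨a, ha⟩ := (S.proj_eq_zero_iff (x := y⁻¹ * x)).1 (by simp [h])
  exact ⟨a, by simp [ha]⟩

section Lift

variable (p : ℕ) [Module (ZMod p) V] {X : Type*} [AddCommGroup X] [Module (ZMod p) X]

/-- The linear map on the quotient of a central extension induced by a homomorphism from `P` to an
additive group that vanishes on the kernel. -/
noncomputable def lift (f : P → X) (hmul : ∀ x y, f (x * y) = f x + f y)
    (hincl : ∀ a, f (S.incl a) = 0) : V →ₗ[ZMod p] X :=
  (AddMonoidHom.toMultiplicative.symm <| S.rightHom.liftOfSurjective S.rightHom_surjective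
    ⟨MonoidHom.mk' (fun x => .ofAdd (f x)) hmul, by
      rw [← S.range_inl_eq_ker_rightHom]
      rintro _ ⟨a, rfl⟩
      exact hincl a.toAdd⟩).toZModLinearMap p

lemma lift_proj (f : P → X) (hmul : ∀ x y, f (x * y) = f x + f y)
    (hincl : ∀ a, f (S.incl a) = 0) (x : P) : S.lift p f hmul hincl (S.proj x) = f x :=
  congrArg Multiplicative.toAdd (MonoidHom.liftOfRightInverse_comp_apply _ _ _ _ x)

end Lift

section CommutatorForm

open scoped commutatorElement

lemma exists_incl_eq_commutatorElement (x y : P) : ∃ a, S.incl a = ⁅x, y⁆ :=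
  S.proj_eq_zero_iff.1 (by simp [commutatorElement_def])

/-- The commutator of two elements of a central extension with abelian quotient, as an element of
the kernel. -/
noncomputable def commutatorKernel (x y : P) : A :=
  (S.exists_incl_eq_commutatorElement x y).choose

@[simp] lemma incl_commutatorKernel (x y : P) : S.incl (S.commutatorKernel x y) = ⁅x, y⁆ :=
  (S.exists_incl_eq_commutatorElement x y).choose_spec

lemma commutatorKernel_mul_left (x y z : P) :
    S.commutatorKernel (x * y) z = S.commutatorKernel x z + S.commutatorKernel y z := by
  apply S.incl_injective
  have hyz : x * ⁅y, z⁆ * x⁻¹ = ⁅y, z⁆ := by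
    rw [← S.incl_commutatorKernel, ← S.commute_incl, mul_inv_cancel_right]
  rw [incl_add, S.commute_incl]
  simp only [incl_commutatorKernel, commutatorElement_mul_left_eq_conj_mul, hyz]

lemma commutatorKernel_swap (x y : P) : -S.commutatorKernel x y = S.commutatorKernel y x :=
  S.incl_injective (by simp)

lemma commutatorKernel_mul_right (x y z : P) :
    S.commutatorKernel x (y * z) = S.commutatorKernel x y + S.commutatorKernel x z := by
  simp only [← S.commutatorKernel_swap _ x, commutatorKernel_mul_left, neg_add]

lemma commutatorKernel_incl_right (x : P) (a : A) : S.commutatorKernel x (S.incl a) = 0 :=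
  S.incl_injective <| by
    simpa using commutatorElement_eq_one_iff_commute.2 (S.commute_incl a x).symm

lemma commutatorKernel_incl_left (a : A) (x : P) : S.commutatorKernel (S.incl a) x = 0 := by
  rw [← commutatorKernel_swap, commutatorKernel_incl_right, neg_zero]

variable (p : ℕ) [Module (ZMod p) A] [Module (ZMod p) V]

/-- The commutator with a fixed element of `P`, as a linear map on the quotient. -/
noncomputable def commutatorHom (x : P) : V →ₗ[ZMod p] A :=
  S.lift p (S.commutatorKernel x) (S.commutatorKernel_mul_right x) (S.commutatorKernel_incl_right x)

lemma commutatorHom_proj (x y : P) : S.commutatorHom p x (S.proj y) = S.commutatorKernel x y :=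
  S.lift_proj p _ _ _ y

lemma commutatorHom_mul (x y : P) :
    S.commutatorHom p (x * y) = S.commutatorHom p x + S.commutatorHom p y :=
  LinearMap.ext <| S.proj_surjective.forall.2 fun z => by
    simp only [LinearMap.add_apply, commutatorHom_proj, commutatorKernel_mul_left]

lemma commutatorHom_incl (a : A) : S.commutatorHom p (S.incl a) = 0 :=
  LinearMap.ext <| S.proj_surjective.forall.2 fun z => by
    simp only [LinearMap.zero_apply, commutatorHom_proj, commutatorKernel_incl_left]

/-- The commutator pairing of a central extension, as a bilinear map on the quotient with values
in the kernel. -/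
noncomputable def commutatorForm : V →ₗ[ZMod p] V →ₗ[ZMod p] A :=
  S.lift p (S.commutatorHom p) (S.commutatorHom_mul p) (S.commutatorHom_incl p)

lemma incl_commutatorForm (x y : P) :
    S.incl (S.commutatorForm p (S.proj x) (S.proj y)) = ⁅x, y⁆ := by
  have h : S.commutatorForm p (S.proj x) = S.commutatorHom p x := S.lift_proj p _ _ _ x
  rw [h, commutatorHom_proj, incl_commutatorKernel]

lemma commutatorForm_isAlt : (S.commutatorForm p).IsAlt :=
  S.proj_surjective.forall.2 fun x => S.incl_injective (by simp [incl_commutatorForm])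

lemma commutatorForm_nondegenerate (hZ : Subgroup.center P ≤ S.inl.range) :
    (S.commutatorForm p).Nondegenerate := by
  rw [(S.commutatorForm_isAlt p).isRefl.nondegenerate_iff_separatingLeft]
  refine S.proj_surjective.forall.2 fun x hx => ?_
  have hxZ : x ∈ Subgroup.center P := Subgroup.mem_center_iff.2 fun y => by
    rw [eq_comm, ← commutatorElement_eq_one_iff_mul_comm, ← S.incl_commutatorForm p, hx, incl_zero]
  obtain ⟨a, ha⟩ := hZ hxZ
  exact S.proj_eq_zero_iff.2 ⟨a.toAdd, ha⟩

end CommutatorForm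

section Baer

variable {p : ℕ} [Module (ZMod p) A] [Module (ZMod p) V]

lemma mul_incl_mul (x y : P) (a : A) : x * S.incl a * y = x * y * S.incl a := by
  rw [mul_assoc, S.commute_incl, mul_assoc]

lemma mul_eq_mul_mul_incl_commutatorForm (x y : P) :
    x * y = y * x * S.incl (S.commutatorForm p (S.proj x) (S.proj y)) := by
  rw [← S.commute_incl, incl_commutatorForm, commutatorElement_def]
  group

variable (p) in
/-- Half the commutator pairing. The scalar `2⁻¹` is the inverse of `2` when `p` is odd. -/
noncomputable def halfCommutatorForm : V →ₗ[ZMod p] V →ₗ[ZMod p] A :=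
  (2⁻¹ : ZMod p) • S.commutatorForm p

lemma halfCommutatorForm_self (v : V) : S.halfCommutatorForm p v v = 0 := by
  simp [halfCommutatorForm, (S.commutatorForm_isAlt p).self_eq_zero]

lemma halfCommutatorForm_swap (v w : V) :
    -S.halfCommutatorForm p v w = S.halfCommutatorForm p w v :=
  LinearMap.IsAlt.neg (B := S.halfCommutatorForm p) S.halfCommutatorForm_self v w

lemma halfCommutatorForm_add_self (hp : Odd p) (v w : V) :
    S.halfCommutatorForm p v w + S.halfCommutatorForm p v w = S.commutatorForm p v w := by
  have htwo : (2 : ZMod p) * 2⁻¹ = 1 := by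
    simpa using ZMod.coe_mul_inv_eq_one 2 (Nat.coprime_two_left.2 hp)
  simp [halfCommutatorForm, ← two_smul (ZMod p), smul_smul, htwo]

variable (p) in
/-- The Baer sum: group multiplication divided by the square root of the commutator. -/
noncomputable def baerAdd (x y : P) : P :=
  x * y * S.incl (-S.halfCommutatorForm p (S.proj x) (S.proj y))

lemma proj_baerAdd (x y : P) : S.proj (S.baerAdd p x y) = S.proj x + S.proj y := by
  simp [baerAdd]

lemma baerAdd_assoc (x y z : P) :
    S.baerAdd p (S.baerAdd p x y) z = S.baerAdd p x (S.baerAdd p y z) := by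
  rw [baerAdd, baerAdd, baerAdd, baerAdd, mul_incl_mul]
  simp only [proj_mul, proj_incl, add_zero, map_add, LinearMap.add_apply, mul_assoc, ← incl_add]
  congr 4
  abel

lemma baerAdd_comm (hp : Odd p) (x y : P) : S.baerAdd p x y = S.baerAdd p y x := by
  rw [baerAdd, baerAdd, S.mul_eq_mul_mul_incl_commutatorForm (p := p) x y, mul_assoc _ (S.incl _),
    ← incl_add, ← S.halfCommutatorForm_add_self hp, add_neg_cancel_right,
    ← S.halfCommutatorForm_swap (S.proj x), neg_neg]

lemma one_baerAdd (x : P) : S.baerAdd p 1 x = x := by simp [baerAdd]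

lemma inv_baerAdd_self (x : P) : S.baerAdd p x⁻¹ x = 1 := by
  simp [baerAdd, halfCommutatorForm_self]

lemma pow_baerAdd_self (x : P) (n : ℕ) : S.baerAdd p (x ^ n) x = x ^ (n + 1) := by
  simp [baerAdd, pow_succ, halfCommutatorForm_self]

/-- The abelian group structure on `P` given by the Baer sum. It has the same powers as `P`. -/
@[reducible] noncomputable def baerAddCommGroup (hp : Odd p) : AddCommGroup P where
  add := S.baerAdd p
  zero := 1
  neg x := x⁻¹
  add_assoc := S.baerAdd_assoc
  zero_add := S.one_baerAdd
  add_zero x := (S.baerAdd_comm hp x 1).trans (S.one_baerAdd x)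
  add_comm := S.baerAdd_comm hp
  neg_add_cancel := S.inv_baerAdd_self
  nsmul n x := x ^ n
  nsmul_zero := pow_zero
  nsmul_succ n x := (S.pow_baerAdd_self x n).symm
  zsmul n x := x ^ n
  zsmul_zero' := zpow_zero
  zsmul_succ' n x := by
    change x ^ ((n + 1 : ℕ) : ℤ) = S.baerAdd p (x ^ (n : ℤ)) x
    rw [zpow_natCast, zpow_natCast, pow_baerAdd_self]
  zsmul_neg' n x := (zpow_negSucc x n).trans (congrArg _ (zpow_natCast x (n + 1)).symm)

theorem exists_section_mul_eq [Fact p.Prime] (hp : Odd p) (hexp : ∀ x : P, x ^ p = 1) :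
    ∃ s : V → P, (∀ v, S.proj (s v) = v) ∧
      ∀ v w, s v * s w = s (v + w) * S.incl (S.halfCommutatorForm p v w) := by
  let : AddCommGroup P := S.baerAddCommGroup hp
  let : Module (ZMod p) P := AddCommGroup.zmodModule hexp
  let π : P →+ V := AddMonoidHom.mk' S.proj S.proj_baerAdd
  obtain ⟨s, hs⟩ := exists_addMonoidHom_rightInverse p π S.proj_surjective
  have hproj (v : V) : S.proj (s v) = v := hs v
  refine ⟨s, hproj, fun v w => ?_⟩
  have hadd : s (v + w) = S.baerAdd p (s v) (s w) := map_add s v w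
  rw [hadd, baerAdd, hproj, hproj, incl_neg, inv_mul_cancel_right]

end Baer

section Automorphisms

/-- The coordinates on `P` given by a set-theoretic section of the projection. -/
noncomputable def equivOfSection (s : V → P) (hs : ∀ v, S.proj (s v) = v) : V × A ≃ P :=
  .ofBijective (fun z => s z.1 * S.incl z.2) <| by
    refine ⟨fun ⟨v, a⟩ ⟨w, b⟩ h => ?_, fun x => ?_⟩
    · obtain rfl : v = w := by simpa [hs] using congrArg S.proj h
      simpa [S.incl_injective.eq_iff] using h
    · obtain ⟨a, ha⟩ := S.exists_eq_mul_incl (hs (S.proj x)).symm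
      exact ⟨(S.proj x, a), ha.symm⟩

@[simp] lemma equivOfSection_apply (s : V → P) (hs : ∀ v, S.proj (s v) = v) (z : V × A) :
    S.equivOfSection s hs z = s z.1 * S.incl z.2 := rfl

lemma card_eq_card_mul_card (S : CentralExtension A P V) :
    Nat.card P = Nat.card V * Nat.card A := by
  rw [← Nat.card_prod]
  exact (Nat.card_congr
    (S.equivOfSection (Function.surjInv S.proj_surjective) (Function.surjInv_eq _))).symm

theorem exists_mulAut_proj_eq {p : ℕ} [Fact p.Prime] [Module (ZMod p) A] [Module (ZMod p) V]
    (hp : Odd p) (hexp : ∀ x : P, x ^ p = 1)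
    (f : V ≃ₗ[ZMod p] V) (α : A ≃ₗ[ZMod p] A)
    (hf : ∀ v w, S.commutatorForm p (f v) (f w) = α (S.commutatorForm p v w)) :
    ∃ φ : MulAut P, ∀ x, S.proj (φ x) = f (S.proj x) := by
  obtain ⟨s, hs, hmul⟩ := S.exists_section_mul_eq hp hexp
  let e : V × A ≃ P := S.equivOfSection s hs
  have he_mul (z w : V × A) :
      e z * e w = e (z.1 + w.1, S.halfCommutatorForm p z.1 w.1 + (z.2 + w.2)) := by
    simp only [e, equivOfSection_apply]
    rw [← mul_assoc, mul_incl_mul, hmul]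
    simp only [incl_add, mul_assoc]
  have hhalf (v w : V) :
      S.halfCommutatorForm p (f v) (f w) = α (S.halfCommutatorForm p v w) := by
    simp [halfCommutatorForm, hf]
  let g : P ≃ P := e.symm.trans ((f.toEquiv.prodCongr α.toEquiv).trans e)
  have hg (z : V × A) : g (e z) = e (f z.1, α z.2) := by simp [g, Prod.map]
  refine ⟨MulEquiv.mk' g (e.surjective.forall₂.2 fun z w => ?_), e.surjective.forall.2 fun z => ?_⟩
  · simp only [he_mul, hg, hhalf, map_add]
  · change S.proj (g (e z)) = f (S.proj (e z))
    rw [hg]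
    simp [e, hs]

variable {p : ℕ}

lemma exists_incl_eq_map_incl (hZ : Subgroup.center P ≤ S.inl.range) (φ : MulAut P) (a : A) :
    ∃ b, S.incl b = φ (S.incl a) := by
  obtain ⟨b, hb⟩ := hZ (MulEquivClass.apply_mem_center φ (S.inl_mem_center (.ofAdd a)))
  exact ⟨b.toAdd, hb⟩

lemma proj_map_incl (hZ : Subgroup.center P ≤ S.inl.range) (φ : MulAut P) (a : A) :
    S.proj (φ (S.incl a)) = 0 :=
  S.proj_eq_zero_iff.2 (S.exists_incl_eq_map_incl hZ φ a)

lemma exists_linearEquiv_incl_eq_map_incl [Module (ZMod p) A]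
    (hZ : Subgroup.center P ≤ S.inl.range) (φ : MulAut P) :
    ∃ α : A ≃ₗ[ZMod p] A, ∀ a, S.incl (α a) = φ (S.incl a) := by
  choose α hα using S.exists_incl_eq_map_incl hZ φ
  have hadd (a b : A) : α (a + b) = α a + α b := S.incl_injective (by simp [hα])
  have hinj : Function.Injective α := fun a b hab =>
    S.incl_injective (φ.injective (by rw [← hα, ← hα, hab]))
  have hsurj : Function.Surjective α := fun b => by
    obtain ⟨a, ha⟩ := S.exists_incl_eq_map_incl hZ φ⁻¹ b
    exact ⟨a, S.incl_injective (by rw [hα, ha, MulAut.apply_inv_self])⟩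
  exact ⟨.ofBijective ((AddMonoidHom.mk' α hadd).toZModLinearMap p) ⟨hinj, hsurj⟩, hα⟩

lemma commutatorForm_proj_map [Module (ZMod p) A] [Module (ZMod p) V] {φ : MulAut P}
    {α : A → A} (hα : ∀ a, S.incl (α a) = φ (S.incl a)) (x y : P) :
    S.commutatorForm p (S.proj (φ x)) (S.proj (φ y)) =
      α (S.commutatorForm p (S.proj x) (S.proj y)) :=
  S.incl_injective <| by rw [hα, incl_commutatorForm, incl_commutatorForm, map_commutatorElement]

end Automorphisms

section AutAction

variable {p : ℕ} [Module (ZMod p) V]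

open scoped commutatorElement in
lemma map_eq_self_of_mem_commutator {φ : MulAut P} (hφ : ∀ x, S.proj (φ x) = S.proj x) {z : P}
    (hz : z ∈ commutator P) : φ z = z := by
  have hcomm (x y : P) : φ ⁅x, y⁆ = ⁅x, y⁆ := by
    obtain ⟨a, ha⟩ := S.exists_eq_mul_incl (hφ x)
    obtain ⟨b, hb⟩ := S.exists_eq_mul_incl (hφ y)
    rw [map_commutatorElement, ha, hb]
    simp only [← S.incl_commutatorKernel, commutatorKernel_mul_left, commutatorKernel_mul_right,
      commutatorKernel_incl_left, commutatorKernel_incl_right, add_zero]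
  have hle : commutator P ≤ φ.toMonoidHom.eqLocus (.id P) :=
    Subgroup.commutator_le.2 fun x _ y _ => hcomm x y
  exact hle hz

lemma mk_eq_mk_iff_proj_eq (hZ : Subgroup.center P ≤ S.inl.range) {x y : P} :
    (x : P ⧸ Subgroup.center P) = y ↔ S.proj x = S.proj y := by
  have hrange : S.inl.range = Subgroup.center P :=
    le_antisymm (by rintro _ ⟨a, rfl⟩; exact S.inl_mem_center a) hZ
  rw [eq_comm, QuotientGroup.eq, ← hrange, S.range_inl_eq_ker_rightHom]
  exact (MonoidHom.eq_iff _).symm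

variable (p) in
/-- The action on the quotient `V` of the automorphisms of a central extension whose kernel
contains the whole centre. -/
noncomputable def autAction (hZ : Subgroup.center P ≤ S.inl.range) :
    MulAut P →* LinearMap.GeneralLinearGroup (ZMod p) V :=
  MonoidHom.toHomUnits
    { toFun φ := S.lift p (fun x => S.proj (φ x)) (by simp) (S.proj_map_incl hZ φ)
      map_one' := LinearMap.ext <| S.proj_surjective.forall.2 fun x => by simp [lift_proj]
      map_mul' φ ψ := LinearMap.ext <| S.proj_surjective.forall.2 fun x => by simp [lift_proj] }

lemma autAction_proj (hZ : Subgroup.center P ≤ S.inl.range) (φ : MulAut P) (x : P) :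
    (S.autAction p hZ φ).1 (S.proj x) = S.proj (φ x) :=
  S.lift_proj p _ _ (S.proj_map_incl hZ φ) x

lemma autAction_eq_iff (hZ : Subgroup.center P ≤ S.inl.range) {φ : MulAut P}
    {f : LinearMap.GeneralLinearGroup (ZMod p) V} :
    S.autAction p hZ φ = f ↔ ∀ x, S.proj (φ x) = f.1 (S.proj x) := by
  simp only [← S.autAction_proj (p := p) hZ]
  rw [← Units.val_inj, LinearMap.ext_iff, S.proj_surjective.forall]

theorem ker_eq_ker_autAction (hZ : Subgroup.center P ≤ S.inl.range)
    (hcomm : Subgroup.center P ≤ commutator P)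
    {ρ : MulAut P →* MulAut (P ⧸ Subgroup.center P) × MulAut (Subgroup.center P)}
    (hρ : ∀ φ : MulAut P,
      (∀ g : P, (ρ φ).1 (g : P ⧸ Subgroup.center P) = (φ g : P ⧸ Subgroup.center P)) ∧
        ∀ z : Subgroup.center P, ((ρ φ).2 z : P) = φ z) :
    ρ.ker = (S.autAction p hZ).ker := by
  ext φ
  have hquot : (ρ φ).1 = 1 ↔ ∀ x, S.proj (φ x) = S.proj x := by
    rw [MulEquiv.ext_iff, QuotientGroup.mk_surjective.forall]
    exact forall_congr' fun x => by rw [(hρ φ).1]; exact S.mk_eq_mk_iff_proj_eq hZ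
  rw [MonoidHom.mem_ker, MonoidHom.mem_ker, autAction_eq_iff, Prod.ext_iff]
  refine ⟨fun h => hquot.1 h.1, fun h => ⟨hquot.2 h, ?_⟩⟩
  ext z
  rw [(hρ φ).2, S.map_eq_self_of_mem_commutator h (hcomm z.2)]
  rfl

end AutAction

section CyclicKernel

variable {p : ℕ} [Module (ZMod p) V] (S : CentralExtension (ZMod p) P V)

lemma autAction_mem_similitudeGroup (hZ : Subgroup.center P ≤ S.inl.range) (φ : MulAut P) :
    S.autAction p hZ φ ∈ similitudeGroup (S.commutatorForm p) := by
  obtain ⟨α, hα⟩ := S.exists_linearEquiv_incl_eq_map_incl (p := p) hZ φ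
  have hmul (a : ZMod p) : α a = α 1 * a := by simpa [mul_comm] using α.map_smul a 1
  have hunit : IsUnit (α 1) := .of_mul_eq_one _ ((hmul _).symm.trans (α.apply_symm_apply 1))
  refine mem_similitudeGroup_iff.2 ⟨hunit.unit, S.proj_surjective.forall₂.2 fun x y => ?_⟩
  rw [autAction_proj, autAction_proj, S.commutatorForm_proj_map hα, hmul, hunit.unit_spec]

theorem range_autAction [Fact p.Prime] (hp : Odd p) (hexp : ∀ x : P, x ^ p = 1)
    (hZ : Subgroup.center P ≤ S.inl.range) :
    (S.autAction p hZ).range = similitudeGroup (S.commutatorForm p) := by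
  refine le_antisymm ?_ fun f ⟨c, hc⟩ => ?_
  · rintro _ ⟨φ, rfl⟩
    exact S.autAction_mem_similitudeGroup hZ φ
  · obtain ⟨φ, hφ⟩ := S.exists_mulAut_proj_eq hp hexp
      (LinearMap.GeneralLinearGroup.toLinearEquiv f) (.smulOfUnit c) hc
    exact ⟨φ, (S.autAction_eq_iff hZ).2 hφ⟩

theorem exists_commutatorForm_toMatrix_eq_stdSymplecticMatrix [Fact p.Prime] {n : ℕ}
    (hP : Nat.card P = p ^ (2 * n + 1)) (hZ : Subgroup.center P ≤ S.inl.range) :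
    ∃ b : Module.Basis (Fin (2 * n)) (ZMod p) V,
      LinearMap.BilinForm.toMatrix b (S.commutatorForm p) = stdSymplecticMatrix (ZMod p) n := by
  have hcard : p ^ (2 * n) = Nat.card V := by
    rw [S.card_eq_card_mul_card, Nat.card_zmod, pow_succ] at hP
    exact (Nat.eq_of_mul_eq_mul_right (Fact.out : p.Prime).pos hP).symm
  have : Finite V := Nat.finite_of_card_ne_zero (hcard ▸ pow_ne_zero _ (NeZero.ne p))
  rw [Module.natCard_eq_pow_finrank (K := ZMod p), Nat.card_zmod] at hcard
  exact exists_symplecticBasis (S.commutatorForm_isAlt p) (S.commutatorForm_nondegenerate p hZ)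
    (Nat.pow_right_injective (Fact.out : p.Prime).two_le hcard).symm

end CyclicKernel

end CentralExtension

/-- **Application 1.** Let `p` be an odd prime, `n ≥ 1`, and `P` the extraspecial group
of order `p^{2n+1}` and exponent `p`: a finite group of order `p^{2n+1}`, of exponent
`p`, whose center has order `p` and coincides with the commutator subgroup.  Let
`ρ : Aut(P) → Aut(V) × Aut(Z(P))` be the natural homomorphism, where `V = P/Z(P)`.
Then the image of `ρ` is isomorphic to the general symplectic group
`GSp(2n, 𝔽_p) = {M ∈ GL_{2n}(𝔽_p) | Mᵀ J M = cJ for some c ∈ 𝔽_p^×}`, where `J` is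
the standard block-diagonal skew-symmetric matrix. -/
theorem extraspecial_aut_image_iso_GSp (p : ℕ) [Fact p.Prime] (hodd : Odd p)
    (n : ℕ) (hn : 1 ≤ n)
    (P : Type*) [Group P] [Finite P]
    (hcard : Nat.card P = p ^ (2 * n + 1))
    (hexp : ∀ g : P, g ^ p = 1)
    (hZcard : Nat.card ↥(Subgroup.center P) = p)
    (hZcomm : Subgroup.center P = commutator P)
    (ρ : MulAut P →* MulAut (P ⧸ Subgroup.center P) × MulAut ↥(Subgroup.center P))
    (hρ : ∀ φ : MulAut P,
      (∀ g : P, (ρ φ).1 ((g : P ⧸ Subgroup.center P)) = ((φ g : P) : P ⧸ Subgroup.center P)) ∧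
      (∀ z : ↥(Subgroup.center P), (((ρ φ).2 z : ↥(Subgroup.center P)) : P) = φ (z : P)))
    (J : Matrix (Fin (2 * n)) (Fin (2 * n)) (ZMod p))
    (hJ : ∀ i j : Fin (2 * n), J i j =
      if (j : ℕ) = (i : ℕ) + 1 ∧ (i : ℕ) % 2 = 0 then 1
      else if (i : ℕ) = (j : ℕ) + 1 ∧ (j : ℕ) % 2 = 0 then -1 else 0)
    (GSp : Subgroup (GL (Fin (2 * n)) (ZMod p)))
    (hGSp : ∀ M : GL (Fin (2 * n)) (ZMod p), M ∈ GSp ↔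
      ∃ c : (ZMod p)ˣ,
        (M : Matrix (Fin (2 * n)) (Fin (2 * n)) (ZMod p))ᵀ * J *
          (M : Matrix (Fin (2 * n)) (Fin (2 * n)) (ZMod p)) = (c : ZMod p) • J) :
    Nonempty (↥ρ.range ≃* ↥GSp) := by
  let e : Multiplicative (ZMod p) ≃* Subgroup.center P :=
    mulEquivOfPrimeCardEq (Nat.card_zmod p) hZcard
  let S := CentralExtension.ofCenterEqCommutator e hZcomm
  let : Module (ZMod p) (Additive (Abelianization P)) :=
    AddCommGroup.zmodModule (S.nsmul_eq_zero_of_pow_eq_one hexp)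
  have hS : Subgroup.center P ≤ S.inl.range := fun z hz =>
    ⟨e.symm ⟨z, hz⟩, congrArg Subtype.val (e.apply_symm_apply ⟨z, hz⟩)⟩
  have hker : ρ.ker = (S.autAction p hS).ker := S.ker_eq_ker_autAction hS hZcomm.le hρ
  have hrange : (S.autAction p hS).range = similitudeGroup (S.commutatorForm p) :=
    S.range_autAction hodd hexp hS
  obtain ⟨b, hb⟩ := S.exists_commutatorForm_toMatrix_eq_stdSymplecticMatrix hcard hS
  obtain rfl : J = stdSymplecticMatrix (ZMod p) n := Matrix.ext hJ
  rw [← hb] at hGSp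
  exact ⟨((rangeMulEquivOfKerEq ρ _ hker).trans (MulEquiv.subgroupCongr hrange)).trans
    (similitudeGroupMulEquivMatrix b hGSp)⟩
end
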